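/- arXiv:1903.04335 — 2 statements merged into one kernel-verified Lean document; each statement's English description precedes it below -/
import Mathlib

section
/- Let K = ⋃_{ℓ=1}^L [a_ℓ, b_ℓ] ⊆ [−1,1] with −1 = a_1 < b_1 < a_2 < ⋯ < a_L < b_L = 1, let w be continuous and strictly positive on K, and let N ≥ 1. For each d ≥ N let m_d := min { sslash P sslash_d : P monic of degree N } and let m_∞ := min { ‖P/w‖_{L1(K)} : P monic of degree N }. Then the sequence (m_d)_{d≥N} is nondecreasing, m_d ≤ m_∞ for all d ≥ N, and lim_{d→∞} m_d = m_∞. -/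
open MeasureTheory Filter Polynomial

/-- The `(d+1) × (d+1)` symmetric Toeplitz matrix built from a vector `y ∈ ℝ^{d+1}`,
with entries `y_{|i−j|}`. -/
noncomputable def toepFin (d : ℕ) (y : Fin (d + 1) → ℝ) :
    Matrix (Fin (d + 1)) (Fin (d + 1)) ℝ :=
  fun i j => y ⟨(((i : ℕ) : ℤ) - ((j : ℕ) : ℤ)).natAbs, by omega⟩

/-- The transplantation `P_ℓ(x) = P(((bℓ−aℓ)x + aℓ + bℓ)/2)` of a polynomial
from `[aℓ, bℓ]` to `[-1, 1]`. -/
noncomputable def transplant (aℓ bℓ : ℝ) (P : Polynomial ℝ) : Polynomial ℝ :=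
  P.comp (Polynomial.C ((bℓ - aℓ) / 2) * Polynomial.X + Polynomial.C ((aℓ + bℓ) / 2))

/-- The entries `J^ℓ_{k,n} = ∫_0^π cos(kθ) sin((n+1)θ) / w_ℓ(cos θ) dθ`, where
`w_ℓ(x) = w(((bℓ−aℓ)x + aℓ + bℓ)/2)` is the transplantation of the weight `w`. -/
noncomputable def Jent (aℓ bℓ : ℝ) (w : ℝ → ℝ) (k n : ℕ) : ℝ :=
  ∫ θ in (0:ℝ)..Real.pi,
    Real.cos (k * θ) * Real.sin ((n + 1) * θ) /
      w (((bℓ - aℓ) * Real.cos θ + aℓ + bℓ) / 2)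

/-- The weighted `L1` norm `‖P/w‖_{L1(K)} = ∑_ℓ ∫_{a_ℓ}^{b_ℓ} |P(t)|/w(t) dt`
on `K = ⋃_{ℓ<L} [a ℓ, b ℓ]`. -/
noncomputable def L1K (L : ℕ) (a b : ℕ → ℝ) (w : ℝ → ℝ) (P : Polynomial ℝ) : ℝ :=
  ∑ ℓ ∈ Finset.range L, ∫ t in (a ℓ)..(b ℓ), |P.eval t| / w t

/-- The ersatz norm `⫽P⫽_d`: the infimum of
`∑_ℓ ((b_ℓ−a_ℓ)/2)(y^{ℓ,+}_0 + y^{ℓ,−}_0)` over vectors `y^{ℓ,±} ∈ ℝ^{d+1}` with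
`y^{ℓ,+} − y^{ℓ,−} = J^{ℓ,d} W^ℓ p` and `Toep_d(y^{ℓ,±}) ⪰ 0`, where `q ℓ = W^ℓ p` is
the vector of second-kind Chebyshev coefficients of the transplantation `P_ℓ`. -/
noncomputable def ersatz (L N d : ℕ) (a b : ℕ → ℝ) (w : ℝ → ℝ) (P : Polynomial ℝ) : ℝ :=
  sInf { s : ℝ |
    ∃ q : ℕ → Fin (N + 1) → ℝ,
      (∀ ℓ < L, transplant (a ℓ) (b ℓ) P
          = ∑ n : Fin (N + 1), Polynomial.C (q ℓ n) * Polynomial.Chebyshev.U ℝ ((n : ℕ) : ℤ)) ∧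
      ∃ yp ym : ℕ → Fin (d + 1) → ℝ,
        (∀ ℓ < L, ∀ k : Fin (d + 1),
            yp ℓ k - ym ℓ k
              = ∑ n : Fin (N + 1), Jent (a ℓ) (b ℓ) w (k : ℕ) (n : ℕ) * q ℓ n) ∧
        (∀ ℓ < L, (toepFin d (yp ℓ)).PosSemidef ∧ (toepFin d (ym ℓ)).PosSemidef) ∧
        s = ∑ ℓ ∈ Finset.range L, ((b ℓ - a ℓ) / 2) * (yp ℓ 0 + ym ℓ 0) }

/-!
On one interval, the substitution `t = ((b - a) cos θ + a + b) / 2` turns `∫ |P| / w` into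
`(b - a) / 2 * ∫_0^π |u|`, where `u` depends linearly on `P`, and `J^{ℓ,d} W^ℓ p` is the vector of
the first `d + 1` trigonometric moments of `u`. The moments of the positive and of the negative
part of `u` are a feasible pair of cost `∫ |u|`, so the ersatz norm is at most the `L¹` norm, and
truncating feasible pairs shows that it is nondecreasing in `d`.

Conversely, the Fejér mean of a vector with a positive semidefinite Toeplitz matrix is a
nonnegative function whose integral is the entry of index `0`. Hence the cost of any feasible pair
is at least the `L¹` norm of the Fejér mean of `u`, and `∫ |u|` exceeds the ersatz by at most the
`L¹` error of the Fejér mean. That error tends to `0` for every integrable `u`, and uniformly on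
the unit ball of a finite-dimensional space; so for each `r < 1` and all large `d` the ersatz norm
is at least `r` times the `L¹` norm on all polynomials of degree at most `N` at once, and this
inequality passes to the infima over monic polynomials.
-/

section

open Real Set

variable {u v : ℝ → ℝ}

/-! ### Moments and Fejér means on the half circle -/

/-- The trigonometric moment `∫_0^π cos(kθ) u(θ) dθ` of a density `u` on the half circle. -/
noncomputable def cosMoment (u : ℝ → ℝ) (k : ℕ) : ℝ :=
  ∫ θ in (0 : ℝ)..π, cos (k * θ) * u θ

theorem intervalIntegrable_cos_mul (hu : IntervalIntegrable u volume 0 π) (k : ℝ) :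
    IntervalIntegrable (fun θ => cos (k * θ) * u θ) volume 0 π :=
  hu.continuousOn_mul (by fun_prop)

theorem cosMoment_add (hu : IntervalIntegrable u volume 0 π)
    (hv : IntervalIntegrable v volume 0 π) (k : ℕ) :
    cosMoment (u + v) k = cosMoment u k + cosMoment v k := by
  simp only [cosMoment, Pi.add_apply, mul_add]
  exact intervalIntegral.integral_add (intervalIntegrable_cos_mul hu k)
    (intervalIntegrable_cos_mul hv k)

theorem cosMoment_smul (c : ℝ) (u : ℝ → ℝ) (k : ℕ) :
    cosMoment (c • u) k = c * cosMoment u k := by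
  simp only [cosMoment, Pi.smul_apply, smul_eq_mul, mul_left_comm _ c,
    intervalIntegral.integral_const_mul]

theorem cosMoment_sub (hu : IntervalIntegrable u volume 0 π)
    (hv : IntervalIntegrable v volume 0 π) (k : ℕ) :
    cosMoment (u - v) k = cosMoment u k - cosMoment v k := by
  simp only [cosMoment, Pi.sub_apply, mul_sub]
  exact intervalIntegral.integral_sub (intervalIntegrable_cos_mul hu k)
    (intervalIntegrable_cos_mul hv k)

theorem integral_cos_intCast_mul (k : ℤ) :
    ∫ θ in (0 : ℝ)..π, cos (k * θ) = if k = 0 then π else 0 := by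
  split_ifs with hk
  · simp [hk]
  · have hk' : (k : ℝ) ≠ 0 := Int.cast_ne_zero.2 hk
    rw [intervalIntegral.integral_comp_mul_left cos hk', integral_cos]
    simp [sin_int_mul_pi]

/-- The index `|i - j|` of the `(i, j)` entry of a symmetric Toeplitz matrix. -/
def absSub {d : ℕ} (i j : Fin (d + 1)) : Fin (d + 1) :=
  ⟨((i : ℤ) - j).natAbs, by omega⟩

theorem absSub_eq_zero_iff {d : ℕ} {i j : Fin (d + 1)} : absSub i j = 0 ↔ i = j := by
  simp only [absSub, Fin.ext_iff, Fin.val_zero]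
  omega

theorem cos_absSub_mul {d : ℕ} (i j : Fin (d + 1)) (θ : ℝ) :
    cos (absSub i j * θ) = cos (i * θ - j * θ) := by
  rw [absSub, Nat.cast_natAbs, ← sub_mul]
  push_cast
  rcases abs_choice ((i : ℝ) - j) with h | h <;> rw [h]
  rw [neg_mul, cos_neg]

theorem toepFin_posSemidef_iff {d : ℕ} {y : Fin (d + 1) → ℝ} : (toepFin d y).PosSemidef ↔
    ∀ x : Fin (d + 1) → ℝ, 0 ≤ ∑ i, ∑ j, y (absSub i j) * (x i * x j) := by
  have hherm : (toepFin d y).IsHermitian := by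
    ext i j
    simp only [toepFin, Matrix.conjTranspose_apply, star_trivial, ← Int.natAbs_neg ((i : ℤ) - j),
      neg_sub]
  simp only [Matrix.posSemidef_iff_dotProduct_mulVec, hherm, true_and, dotProduct, Matrix.mulVec,
    star_trivial, Finset.mul_sum, mul_left_comm]
  rfl

theorem sum_sum_cos_sub_mul_nonneg {n : ℕ} (x : Fin n → ℝ) (θ : ℝ) :
    0 ≤ ∑ i : Fin n, ∑ j : Fin n, cos (i * θ - j * θ) * (x i * x j) := by
  have : ∑ i : Fin n, ∑ j : Fin n, cos (i * θ - j * θ) * (x i * x j) =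
      (∑ i : Fin n, x i * cos (i * θ)) ^ 2 + (∑ i : Fin n, x i * sin (i * θ)) ^ 2 := by
    simp only [sq, Finset.sum_mul_sum, ← Finset.sum_add_distrib, cos_sub]
    exact Finset.sum_congr rfl fun i _ => Finset.sum_congr rfl fun j _ => by ring
  rw [this]
  positivity

theorem toepFin_cosMoment_posSemidef (d : ℕ) (hu : IntervalIntegrable u volume 0 π)
    (hu0 : ∀ θ, 0 ≤ u θ) : (toepFin d fun k => cosMoment u k).PosSemidef := by
  refine toepFin_posSemidef_iff.2 fun x => ?_
  have hint (i j : Fin (d + 1)) : IntervalIntegrable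
      (fun θ => cos (absSub i j * θ) * u θ * (x i * x j)) volume 0 π :=
    (intervalIntegrable_cos_mul hu _).mul_const _
  have hform : ∑ i, ∑ j, cosMoment u (absSub i j) * (x i * x j) =
      ∫ θ in (0 : ℝ)..π, ∑ i, ∑ j, cos (absSub i j * θ) * u θ * (x i * x j) := by
    rw [intervalIntegral.integral_finsetSum fun i _ => ?_]
    · refine Finset.sum_congr rfl fun i _ => ?_
      rw [intervalIntegral.integral_finsetSum fun j _ => hint i j]
      exact Finset.sum_congr rfl fun j _ => (intervalIntegral.integral_mul_const _ _).symm
    · simpa only [Finset.sum_fn] using IntervalIntegrable.sum Finset.univ fun j _ => hint i j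
  rw [hform]
  refine intervalIntegral.integral_nonneg pi_pos.le fun θ _ => ?_
  simpa only [cos_absSub_mul, Finset.sum_mul, mul_right_comm] using
    mul_nonneg (sum_sum_cos_sub_mul_nonneg x θ) (hu0 θ)

/-- The Fejér mean `σ_d(y)`, as a density on `[0, π]`, of a sequence `y` of trigonometric moments:
`(π(d+1))⁻¹ ∑_{i,j ≤ d} y_{|i-j|} cos((i-j)θ)`, that is
`π⁻¹ (y_0 + 2 ∑_{1 ≤ k ≤ d} (1 - k/(d+1)) y_k cos(kθ))`. -/
noncomputable def fejerMean (d : ℕ) : (Fin (d + 1) → ℝ) →ₗ[ℝ] ℝ → ℝ where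
  toFun y θ := (π * (d + 1))⁻¹ * ∑ i, ∑ j, y (absSub i j) * cos (i * θ - j * θ)
  map_add' y z := by
    ext θ
    simp only [Pi.add_apply, add_mul, Finset.sum_add_distrib, mul_add]
  map_smul' c y := by
    ext θ
    simp only [Pi.smul_apply, smul_eq_mul, mul_assoc, Finset.mul_sum, mul_left_comm c,
      RingHom.id_apply]

variable {d : ℕ} {y : Fin (d + 1) → ℝ}

theorem fejerMean_apply (d : ℕ) (y : Fin (d + 1) → ℝ) (θ : ℝ) : fejerMean d y θ =
    (π * (d + 1))⁻¹ * ∑ i, ∑ j, y (absSub i j) * cos (i * θ - j * θ) :=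
  rfl

theorem continuous_fejerMean (d : ℕ) (y : Fin (d + 1) → ℝ) : Continuous (fejerMean d y) := by
  simp only [funext (fejerMean_apply d y)]
  fun_prop

theorem intervalIntegrable_fejerMean (d : ℕ) (y : Fin (d + 1) → ℝ) :
    IntervalIntegrable (fejerMean d y) volume 0 π :=
  (continuous_fejerMean d y).intervalIntegrable 0 π

theorem fejerMean_nonneg (hy : (toepFin d y).PosSemidef) (θ : ℝ) : 0 ≤ fejerMean d y θ := by
  rw [fejerMean_apply]
  simp only [cos_sub, mul_add, Finset.sum_add_distrib]
  have hform := toepFin_posSemidef_iff.1 hy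
  have := pi_pos
  have := hform fun i => cos (i * θ)
  have := hform fun i => sin (i * θ)
  positivity

theorem integral_fejerMean (d : ℕ) (y : Fin (d + 1) → ℝ) :
    ∫ θ in (0 : ℝ)..π, fejerMean d y θ = y 0 := by
  have hterm (i j : Fin (d + 1)) :
      ∫ θ in (0 : ℝ)..π, y (absSub i j) * cos (i * θ - j * θ) = if i = j then π * y 0 else 0 := by
    have hcos (θ : ℝ) : cos (i * θ - j * θ) = cos (((i : ℤ) - j : ℤ) * θ) := by
      push_cast
      rw [sub_mul]
    simp only [hcos, intervalIntegral.integral_const_mul, integral_cos_intCast_mul]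
    simp only [sub_eq_zero, Nat.cast_inj, Fin.val_inj]
    split_ifs with hij
    · rw [absSub_eq_zero_iff.2 hij, mul_comm]
    · rw [mul_zero]
  simp only [fejerMean_apply]
  rw [intervalIntegral.integral_const_mul, intervalIntegral.integral_finsetSum fun i _ =>
    Continuous.intervalIntegrable (by fun_prop) _ _]
  have hrow (i : Fin (d + 1)) : ∫ θ in (0 : ℝ)..π, ∑ j : Fin (d + 1),
      y (absSub i j) * cos (i * θ - j * θ) = π * y 0 := by
    rw [intervalIntegral.integral_finsetSum fun j _ =>
      Continuous.intervalIntegrable (by fun_prop) _ _]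
    simp [hterm]
  simp only [hrow, Finset.sum_const, Finset.card_univ, Fintype.card_fin, nsmul_eq_mul]
  push_cast
  field_simp

/-- `(yp, ym)` is a feasible pair for the ersatz of `∫_0^π |u|`: their difference is the vector of
the first `d + 1` trigonometric moments of `u`, and both have a positive semidefinite Toeplitz
matrix, as the moments of the positive and of the negative part of `u` do. -/
def IsToeplitzSplitting (d : ℕ) (u : ℝ → ℝ) (yp ym : Fin (d + 1) → ℝ) : Prop :=
  (∀ k : Fin (d + 1), yp k - ym k = cosMoment u k) ∧
    (toepFin d yp).PosSemidef ∧ (toepFin d ym).PosSemidef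

theorem exists_isToeplitzSplitting (d : ℕ) (hu : IntervalIntegrable u volume 0 π) :
    ∃ yp ym, IsToeplitzSplitting d u yp ym ∧ yp 0 + ym 0 = ∫ θ in (0 : ℝ)..π, |u θ| := by
  have hpos : IntervalIntegrable u⁺ volume 0 π := ⟨hu.1.pos_part, hu.2.pos_part⟩
  have hneg : IntervalIntegrable u⁻ volume 0 π := ⟨hu.1.neg_part, hu.2.neg_part⟩
  refine ⟨fun k => cosMoment u⁺ k, fun k => cosMoment u⁻ k, ⟨fun k => ?_,
    toepFin_cosMoment_posSemidef d hpos fun θ => posPart_nonneg (u θ),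
    toepFin_cosMoment_posSemidef d hneg fun θ => negPart_nonneg (u θ)⟩, ?_⟩
  · rw [← cosMoment_sub hpos hneg, posPart_sub_negPart]
  · rw [← cosMoment_add hpos hneg, posPart_add_negPart]
    simp [cosMoment]

theorem IsToeplitzSplitting.castSucc {yp ym : Fin (d + 1 + 1) → ℝ}
    (h : IsToeplitzSplitting (d + 1) u yp ym) :
    IsToeplitzSplitting d u (fun k => yp k.castSucc) (fun k => ym k.castSucc) :=
  ⟨fun k => h.1 k.castSucc, h.2.1.submatrix Fin.castSucc, h.2.2.submatrix Fin.castSucc⟩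

theorem IsToeplitzSplitting.add_nonneg {yp ym : Fin (d + 1) → ℝ}
    (h : IsToeplitzSplitting d u yp ym) : 0 ≤ yp 0 + ym 0 :=
  _root_.add_nonneg (by simpa [toepFin] using h.2.1.diag_nonneg (i := 0))
    (by simpa [toepFin] using h.2.2.diag_nonneg (i := 0))

theorem IsToeplitzSplitting.integral_abs_fejerMean_le {yp ym : Fin (d + 1) → ℝ}
    (h : IsToeplitzSplitting d u yp ym) :
    ∫ θ in (0 : ℝ)..π, |fejerMean d (fun k => cosMoment u k) θ| ≤ yp 0 + ym 0 := by
  have hmoments : (fun k : Fin (d + 1) => cosMoment u k) = yp - ym := funext fun k => (h.1 k).symm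
  have hint := intervalIntegrable_fejerMean d
  calc ∫ θ in (0 : ℝ)..π, |fejerMean d (fun k => cosMoment u k) θ|
      ≤ ∫ θ in (0 : ℝ)..π, (fejerMean d yp θ + fejerMean d ym θ) := by
        refine intervalIntegral.integral_mono_on pi_pos.le (hint _).abs ((hint _).add (hint _))
          fun θ _ => ?_
        rw [hmoments, map_sub, Pi.sub_apply]
        have hp := fejerMean_nonneg h.2.1 θ
        have hm := fejerMean_nonneg h.2.2 θ
        exact abs_le.2 ⟨by linarith, by linarith⟩
    _ = yp 0 + ym 0 := by
        rw [intervalIntegral.integral_add (hint _) (hint _), integral_fejerMean, integral_fejerMean]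

/-! ### Convergence of Fejér means in `L¹` -/

/-- The `L¹` error on `[0, π]` made in replacing `u` by the Fejér mean of its first `d + 1`
trigonometric moments; the defect of the ersatz of `∫_0^π |u|` is at most this error. -/
noncomputable def fejerError (d : ℕ) (u : ℝ → ℝ) : ℝ :=
  ∫ θ in (0 : ℝ)..π, |u θ - fejerMean d (fun k => cosMoment u k) θ|

theorem IsToeplitzSplitting.integral_abs_le {yp ym : Fin (d + 1) → ℝ}
    (h : IsToeplitzSplitting d u yp ym) (hu : IntervalIntegrable u volume 0 π) :
    ∫ θ in (0 : ℝ)..π, |u θ| ≤ yp 0 + ym 0 + fejerError d u := by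
  have hF := intervalIntegrable_fejerMean d fun k => cosMoment u k
  calc ∫ θ in (0 : ℝ)..π, |u θ|
      ≤ ∫ θ in (0 : ℝ)..π, (|fejerMean d (fun k => cosMoment u k) θ| +
          |u θ - fejerMean d (fun k => cosMoment u k) θ|) := by
        refine intervalIntegral.integral_mono_on pi_pos.le hu.abs (hF.abs.add (hu.sub hF).abs)
          fun θ _ => ?_
        simpa using abs_add_le (fejerMean d (fun k => cosMoment u k) θ)
          (u θ - fejerMean d (fun k => cosMoment u k) θ)
    _ ≤ yp 0 + ym 0 + fejerError d u := by
        rw [intervalIntegral.integral_add hF.abs (hu.sub hF).abs]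
        exact add_le_add_left h.integral_abs_fejerMean_le _

theorem fejerError_nonneg (d : ℕ) (u : ℝ → ℝ) : 0 ≤ fejerError d u :=
  intervalIntegral.integral_nonneg pi_pos.le fun _ _ => abs_nonneg _

theorem fejerError_add_le (d : ℕ) (hu : IntervalIntegrable u volume 0 π)
    (hv : IntervalIntegrable v volume 0 π) :
    fejerError d (u + v) ≤ fejerError d u + fejerError d v := by
  have hmoments : (fun k : Fin (d + 1) => cosMoment (u + v) k) =
      (fun k : Fin (d + 1) => cosMoment u k) + fun k : Fin (d + 1) => cosMoment v k :=
    funext fun k => cosMoment_add hu hv k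
  have hF := intervalIntegrable_fejerMean d
  rw [fejerError, hmoments, map_add, fejerError, fejerError,
    ← intervalIntegral.integral_add (hu.sub (hF _)).abs (hv.sub (hF _)).abs]
  refine intervalIntegral.integral_mono_on pi_pos.le ((hu.add hv).sub ((hF _).add (hF _))).abs
    ((hu.sub (hF _)).abs.add (hv.sub (hF _)).abs) fun θ _ => ?_
  simp only [Pi.add_apply, add_sub_add_comm]
  exact abs_add_le _ _

theorem fejerError_smul (d : ℕ) (c : ℝ) (u : ℝ → ℝ) :
    fejerError d (c • u) = |c| * fejerError d u := by
  have hmoments : (fun k : Fin (d + 1) => cosMoment (c • u) k) =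
      c • fun k : Fin (d + 1) => cosMoment u k := funext fun k => cosMoment_smul c u k
  simp only [fejerError, hmoments, map_smul, Pi.smul_apply, smul_eq_mul, ← mul_sub, abs_mul,
    intervalIntegral.integral_const_mul]

theorem fejerError_congr_ae (d : ℕ) (h : u =ᵐ[volume.restrict (Ioc 0 π)] v) :
    fejerError d u = fejerError d v := by
  have hmoments : (fun k : Fin (d + 1) => cosMoment u k) = fun k : Fin (d + 1) => cosMoment v k :=
    funext fun k => intervalIntegral.integral_congr_ae_restrict <| by
      rw [uIoc_of_le pi_pos.le]
      filter_upwards [h] with θ hθ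
      rw [hθ]
  refine intervalIntegral.integral_congr_ae_restrict ?_
  rw [uIoc_of_le pi_pos.le]
  filter_upwards [h] with θ hθ
  rw [hθ, hmoments]

theorem fejerError_le (d : ℕ) (hu : IntervalIntegrable u volume 0 π) :
    fejerError d u ≤ 2 * ∫ θ in (0 : ℝ)..π, |u θ| := by
  obtain ⟨yp, ym, h, hy⟩ := exists_isToeplitzSplitting d hu
  have hF := intervalIntegrable_fejerMean d fun k => cosMoment u k
  calc fejerError d u
      ≤ ∫ θ in (0 : ℝ)..π, (|u θ| + |fejerMean d (fun k => cosMoment u k) θ|) :=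
        intervalIntegral.integral_mono_on pi_pos.le (hu.sub hF).abs (hu.abs.add hF.abs)
          fun θ _ => abs_sub _ _
    _ ≤ 2 * ∫ θ in (0 : ℝ)..π, |u θ| := by
        rw [intervalIntegral.integral_add hu.abs hF.abs, two_mul, ← hy]
        exact add_le_add_right h.integral_abs_fejerMean_le _

theorem cosMoment_cos (m : ℕ) (i j : Fin (d + 1)) :
    cosMoment (fun θ => cos (m * θ)) (absSub i j) =
      π / 2 * ((if (i : ℕ) = j + m then 1 else 0) + if (j : ℕ) = i + m then 1 else 0) := by
  have hprod (θ : ℝ) : cos (absSub i j * θ) * cos (m * θ) =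
      1 / 2 * (cos (((i : ℤ) - j - m : ℤ) * θ) + cos (((i : ℤ) - j + m : ℤ) * θ)) := by
    rw [cos_absSub_mul]
    push_cast
    rw [sub_mul _ (m : ℝ), add_mul _ (m : ℝ), sub_mul, cos_sub _ (m * θ), cos_add _ (m * θ)]
    ring
  simp only [cosMoment, hprod]
  rw [intervalIntegral.integral_const_mul, intervalIntegral.integral_add
    (Continuous.intervalIntegrable (by fun_prop) _ _)
    (Continuous.intervalIntegrable (by fun_prop) _ _), integral_cos_intCast_mul,
    integral_cos_intCast_mul]
  have hsub : (i : ℤ) - j - m = 0 ↔ (i : ℕ) = j + m := by omega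
  have hadd : (i : ℤ) - j + m = 0 ↔ (j : ℕ) = i + m := by omega
  simp only [hsub, hadd]
  split_ifs <;> ring

theorem sum_sum_ite_val_eq_add (n m : ℕ) :
    ∑ j : Fin n, ∑ i : Fin n, (if (i : ℕ) = j + m then (1 : ℝ) else 0) = (n - m : ℕ) := by
  have hrow (j : Fin n) : ∑ i : Fin n, (if (i : ℕ) = j + m then (1 : ℝ) else 0) =
      if (j : ℕ) < n - m then 1 else 0 := by
    split_ifs with h
    · rw [Fintype.sum_eq_single ⟨j + m, by omega⟩ fun i hi => if_neg fun h' => hi (Fin.ext h'),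
        if_pos rfl]
    · exact Finset.sum_eq_zero fun i _ => if_neg (by omega)
  simp only [hrow, Finset.sum_boole]
  rw [Fin.card_filter_val_lt]
  simp

theorem fejerMean_cosMoment_cos {m : ℕ} (hm : m ≤ d) (θ : ℝ) :
    fejerMean d (fun k => cosMoment (fun θ => cos (m * θ)) k) θ =
      (1 - m / (d + 1)) * cos (m * θ) := by
  have hterm (i j : Fin (d + 1)) : cosMoment (fun θ => cos (m * θ)) (absSub i j) *
      cos (i * θ - j * θ) = π / 2 * cos (m * θ) *
        ((if (i : ℕ) = j + m then 1 else 0) + if (j : ℕ) = i + m then 1 else 0) := by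
    have hsub (hi : (i : ℕ) = j + m) : cos (i * θ - j * θ) = cos (m * θ) := by
      rw [hi, Nat.cast_add, add_mul, add_sub_cancel_left]
    have hadd (hj : (j : ℕ) = i + m) : cos (i * θ - j * θ) = cos (m * θ) := by
      rw [hj, Nat.cast_add, add_mul, sub_add_cancel_left, cos_neg]
    rw [cosMoment_cos]
    split_ifs with hi hj hj
    · rw [hsub hi]; ring
    · rw [hsub hi]; ring
    · rw [hadd hj]; ring
    · ring
  have hswap := sum_sum_ite_val_eq_add (d + 1) m
  rw [Finset.sum_comm] at hswap
  rw [fejerMean_apply]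
  simp only [hterm, ← Finset.mul_sum, Finset.sum_add_distrib]
  rw [sum_sum_ite_val_eq_add, hswap, Nat.cast_sub (by omega)]
  push_cast
  field_simp
  ring

theorem tendsto_fejerError_cos (m : ℕ) :
    Tendsto (fun d => fejerError d fun θ => cos (m * θ)) atTop (nhds 0) := by
  have herror : (fun d : ℕ => (m * ∫ θ in (0 : ℝ)..π, |cos (m * θ)|) / ((d : ℝ) + 1)) =ᶠ[atTop]
      fun d => fejerError d fun θ => cos (m * θ) := by
    filter_upwards [eventually_ge_atTop m] with d hd
    have hpos : (0 : ℝ) ≤ m / (d + 1) := by positivity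
    simp only [fejerError, fejerMean_cosMoment_cos hd, ← one_sub_mul, sub_sub_cancel, abs_mul,
      abs_of_nonneg hpos, intervalIntegral.integral_const_mul]
    ring
  exact ((tendsto_atTop_add_const_right _ _ tendsto_natCast_atTop_atTop).const_div_atTop _).congr'
    herror

theorem intervalIntegrable_eval_cos (p : ℝ[X]) :
    IntervalIntegrable (fun θ => p.eval (cos θ)) volume 0 π :=
  Continuous.intervalIntegrable (by fun_prop) _ _

theorem tendsto_fejerError_eval_cos (p : ℝ[X]) :
    Tendsto (fun d => fejerError d fun θ => p.eval (cos θ)) atTop (nhds 0) := by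
  have hp : p ∈ Submodule.span ℝ (range (Chebyshev.chebyshevTsequence ℝ)) := by
    rw [Polynomial.Sequence.span _ fun n => by simp [Chebyshev.chebyshevTsequence]]
    exact Submodule.mem_top
  induction hp using Submodule.span_induction with
  | mem p hp =>
    obtain ⟨n, rfl⟩ := hp
    have hcos : (fun θ => (Chebyshev.T ℝ n).eval (cos θ)) = fun θ => cos (n * θ) :=
      funext fun θ => by rw [Chebyshev.T_real_cos, Int.cast_natCast]
    simpa only [← hcos] using! tendsto_fejerError_cos n
  | zero =>
    have hzero (d : ℕ) : fejerError d 0 = 0 := by simpa using fejerError_smul d 0 0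
    simp only [eval_zero, ← Pi.zero_def, hzero]
    exact tendsto_const_nhds
  | add p q _ _ hp hq =>
    refine squeeze_zero (fun d => fejerError_nonneg d _) (fun d => ?_) (by simpa using hp.add hq)
    simpa only [eval_add] using!
      fejerError_add_le d (intervalIntegrable_eval_cos p) (intervalIntegrable_eval_cos q)
  | smul c p _ hp =>
    have hsmul : (fun θ => (c • p).eval (cos θ)) = c • fun θ => p.eval (cos θ) :=
      funext fun θ => eval_smul c p (cos θ)
    simpa only [hsmul, fejerError_smul, mul_zero] using hp.const_mul |c|

theorem exists_polynomial_integral_abs_sub_le (hu : IntervalIntegrable u volume 0 π) {ε : ℝ}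
    (hε : 0 < ε) : ∃ p : ℝ[X], ∫ θ in (0 : ℝ)..π, |u θ - p.eval (cos θ)| ≤ ε := by
  obtain ⟨v, hv, -⟩ := hu.1.exists_boundedContinuous_integral_sub_le (half_pos hε)
  obtain ⟨p, hp⟩ := exists_polynomial_near_of_continuousOn (-1) 1 (v ∘ arccos)
    (v.continuous.comp continuous_arccos).continuousOn (ε / (2 * π)) (by positivity)
  refine ⟨p, ?_⟩
  have hvint : IntervalIntegrable v volume 0 π := v.continuous.intervalIntegrable _ _
  have hpint := intervalIntegrable_eval_cos p
  calc ∫ θ in (0 : ℝ)..π, |u θ - p.eval (cos θ)|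
      ≤ ∫ θ in (0 : ℝ)..π, (|u θ - v θ| + ε / (2 * π)) := by
        refine intervalIntegral.integral_mono_on pi_pos.le (hu.sub hpint).abs
          ((hu.sub hvint).abs.add intervalIntegrable_const) fun θ hθ => ?_
        have hclose := hp (cos θ) ⟨neg_one_le_cos θ, cos_le_one θ⟩
        rw [Function.comp_apply, arccos_cos hθ.1 hθ.2, abs_sub_comm] at hclose
        exact (abs_sub_le _ (v θ) _).trans (by gcongr)
    _ ≤ ε := by
        rw [intervalIntegral.integral_add (hu.sub hvint).abs intervalIntegrable_const,
          intervalIntegral.integral_of_le pi_pos.le, intervalIntegral.integral_const]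
        have hconst : (π - 0) • (ε / (2 * π)) = ε / 2 := by
          rw [smul_eq_mul]
          field_simp
          ring
        rw [hconst]
        exact (add_le_add_left hv _).trans_eq (add_halves ε)

theorem tendsto_fejerError (hu : IntervalIntegrable u volume 0 π) :
    Tendsto (fun d => fejerError d u) atTop (nhds 0) := by
  refine tendsto_order.2 ⟨fun c hc => .of_forall fun d => hc.trans_le (fejerError_nonneg d u),
    fun ε hε => ?_⟩
  obtain ⟨p, hp⟩ := exists_polynomial_integral_abs_sub_le hu (by positivity : 0 < ε / 4)
  have hpint := intervalIntegrable_eval_cos p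
  filter_upwards [(tendsto_fejerError_eval_cos p).eventually_lt_const (half_pos hε)] with d hd
  have hle := fejerError_le d (hu.sub hpint)
  have hadd := fejerError_add_le d (hu.sub hpint) hpint
  have hsplit : ((fun θ => u θ - p.eval (cos θ)) + fun θ => p.eval (cos θ)) = u :=
    sub_add_cancel u _
  rw [hsplit] at hadd
  linarith

theorem eventually_seminorm_le_mul_norm {ι W : Type*} [NormedAddCommGroup W] [NormedSpace ℝ W]
    [FiniteDimensional ℝ W] {l : Filter ι} {p : ι → Seminorm ℝ W}
    (hp : ∀ x, Tendsto (fun i => p i x) l (nhds 0)) {ε : ℝ} (hε : 0 < ε) :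
    ∀ᶠ i in l, ∀ x, p i x ≤ ε * ‖x‖ := by
  let e := Module.finBasis ℝ W
  let C := ‖(e.equivFunL : W →L[ℝ] Fin (Module.finrank ℝ W) → ℝ)‖
  have hcoord (x : W) (k) : |e.equivFun x k| ≤ C * ‖x‖ :=
    (norm_le_pi_norm _ k).trans
      ((e.equivFunL : W →L[ℝ] Fin (Module.finrank ℝ W) → ℝ).le_opNorm x)
  have hle (i : ι) (x : W) : p i x ≤ (∑ k, C * p i (e k)) * ‖x‖ := calc
    p i x = p i (∑ k, e.equivFun x k • e k) := by rw [e.sum_equivFun]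
    _ ≤ ∑ k, p i (e.equivFun x k • e k) :=
        Finset.le_sum_of_subadditive _ (map_zero _).le (map_add_le_add (p i)) _ _
    _ ≤ (∑ k, C * p i (e k)) * ‖x‖ := by
        rw [Finset.sum_mul]
        refine Finset.sum_le_sum fun k _ => ?_
        rw [map_smul_eq_mul, mul_right_comm]
        exact mul_le_mul_of_nonneg_right (hcoord x k) (apply_nonneg _ _)
  have hsum : Tendsto (fun i => ∑ k, C * p i (e k)) l (nhds 0) := by
    simpa using tendsto_finsetSum Finset.univ fun k _ => (hp (e k)).const_mul C
  filter_upwards [hsum.eventually_le_const hε] with i hi x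
  exact (hle i x).trans (mul_le_mul_of_nonneg_right hi (norm_nonneg x))

/-- `fejerError d` as a seminorm on `L¹(0, π)`. -/
noncomputable def fejerSeminorm (d : ℕ) :
    Seminorm ℝ (ℝ →₁[volume.restrict (Ioc (0 : ℝ) π)] ℝ) :=
  Seminorm.of (fun f => fejerError d f)
    (fun f g => by
      rw [fejerError_congr_ae d (Lp.coeFn_add f g)]
      exact fejerError_add_le d
        ((intervalIntegrable_iff_integrableOn_Ioc_of_le pi_pos.le).2 (L1.integrable_coeFn f))
        ((intervalIntegrable_iff_integrableOn_Ioc_of_le pi_pos.le).2 (L1.integrable_coeFn g)))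
    fun c f => by rw [fejerError_congr_ae d (Lp.coeFn_smul c f), fejerError_smul, norm_eq_abs]

theorem eventually_fejerError_le {V : Type*} [AddCommGroup V] [Module ℝ V] [FiniteDimensional ℝ V]
    (Φ : V →ₗ[ℝ] ℝ → ℝ) (hΦ : ∀ x, IntervalIntegrable (Φ x) volume 0 π) {ε : ℝ} (hε : 0 < ε) :
    ∀ᶠ d in atTop, ∀ x, fejerError d (Φ x) ≤ ε * ∫ θ in (0 : ℝ)..π, |Φ x θ| := by
  -- `∫ |Φ x|` is only a seminorm on `V`, but it is the norm of `L¹` on the range of `Ψ`.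
  let Ψ : V →ₗ[ℝ] ℝ →₁[volume.restrict (Ioc (0 : ℝ) π)] ℝ :=
    { toFun := fun x => (hΦ x).1.toL1 (Φ x)
      map_add' := fun x y => by
        simp only [map_add]
        exact Integrable.toL1_add _ _ (hΦ x).1 (hΦ y).1
      map_smul' := fun c x => by
        simp only [map_smul]
        exact Integrable.toL1_smul' _ (hΦ x).1 c }
  have hlim (f : LinearMap.range Ψ) :
      Tendsto (fun d => (fejerSeminorm d).comp (LinearMap.range Ψ).subtype f) atTop (nhds 0) :=
    tendsto_fejerError
      ((intervalIntegrable_iff_integrableOn_Ioc_of_le pi_pos.le).2 (L1.integrable_coeFn f.1))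
  filter_upwards [eventually_seminorm_le_mul_norm hlim hε] with d hd x
  have hcoe : Ψ x =ᵐ[volume.restrict (Ioc 0 π)] Φ x := (hΦ x).1.coeFn_toL1
  calc fejerError d (Φ x) = fejerError d (Ψ x) := fejerError_congr_ae d hcoe.symm
    _ ≤ ε * ‖Ψ x‖ := hd ⟨Ψ x, x, rfl⟩
    _ = ε * ∫ θ in (0 : ℝ)..π, |Φ x θ| := by
        rw [L1.norm_eq_integral_norm, intervalIntegral.integral_of_le pi_pos.le]
        congr 1
        exact integral_congr_ae (hcoe.fun_comp norm)

/-! ### From an interval to the half circle -/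

variable {a b : ℝ} {w : ℝ → ℝ}

/-- The point of `[a, b]` above which the point `θ` of the half circle with diameter `[a, b]`
lies. -/
noncomputable def arcPoint (a b θ : ℝ) : ℝ :=
  ((b - a) * cos θ + a + b) / 2

theorem continuous_arcPoint (a b : ℝ) : Continuous (arcPoint a b) := by
  unfold arcPoint
  fun_prop

theorem arcPoint_mem_Ioo (hab : a < b) {θ : ℝ} (hθ : θ ∈ Ioo 0 π) : arcPoint a b θ ∈ Ioo a b := by
  have hlt : cos θ < 1 := by simpa using cos_lt_cos_of_nonneg_of_le_pi le_rfl hθ.2.le hθ.1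
  have hgt : -1 < cos θ := by simpa using cos_lt_cos_of_nonneg_of_le_pi hθ.1.le le_rfl hθ.2
  constructor <;> unfold arcPoint <;> nlinarith

theorem hasDerivAt_arcPoint (a b θ : ℝ) :
    HasDerivAt (arcPoint a b) (-((b - a) / 2 * sin θ)) θ :=
  ((((hasDerivAt_cos θ).const_mul (b - a)).add_const a).add_const b).div_const 2 |>.congr_deriv
    (by ring)

theorem arcPoint_deriv_nonpos (hab : a ≤ b) {θ : ℝ} (hθ : θ ∈ Ioo (min 0 π) (max 0 π)) :
    -((b - a) / 2 * sin θ) ≤ 0 := by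
  rw [min_eq_left pi_pos.le, max_eq_right pi_pos.le] at hθ
  have := sub_nonneg.2 hab
  have := (sin_pos_of_mem_Ioo hθ).le
  exact neg_nonpos.2 (by positivity)

theorem arcPoint_zero (a b : ℝ) : arcPoint a b 0 = b := by
  rw [arcPoint, cos_zero]
  ring

theorem arcPoint_pi (a b : ℝ) : arcPoint a b π = a := by
  rw [arcPoint, cos_pi]
  ring

theorem integral_comp_arcPoint_mul_sin (hab : a ≤ b) (g : ℝ → ℝ) :
    (b - a) / 2 * ∫ θ in (0 : ℝ)..π, g (arcPoint a b θ) * sin θ = ∫ t in a..b, g t := by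
  have hsubst := intervalIntegral.integral_comp_mul_deriv_of_deriv_nonpos (g := g)
    (continuous_arcPoint a b).continuousOn (fun θ _ => hasDerivAt_arcPoint a b θ)
    fun θ => arcPoint_deriv_nonpos hab (θ := θ)
  rw [arcPoint_zero, arcPoint_pi, intervalIntegral.integral_symm a b] at hsubst
  simp only [Function.comp_apply, mul_neg, intervalIntegral.integral_neg, neg_inj,
    mul_left_comm (g _), intervalIntegral.integral_const_mul] at hsubst
  exact hsubst

theorem intervalIntegrable_sin_div_arcPoint (hab : a < b)
    (hw : IntervalIntegrable (fun t => (w t)⁻¹) volume a b) :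
    IntervalIntegrable (fun θ => sin θ / w (arcPoint a b θ)) volume 0 π := by
  have hsubst := intervalIntegral.integrable_comp_mul_deriv_iff_of_deriv_nonpos
    (g := fun t => (w t)⁻¹) (continuous_arcPoint a b).continuousOn
    (fun θ _ => hasDerivAt_arcPoint a b θ) fun θ => arcPoint_deriv_nonpos hab.le (θ := θ)
  rw [arcPoint_zero, arcPoint_pi] at hsubst
  convert (hsubst.2 hw.symm).const_mul (-(2 / (b - a))) using 2 with θ
  have := sub_ne_zero.2 hab.ne'
  rw [Function.comp_apply]
  field_simp

/-- The density on `[0, π]` obtained from `P / w` on `[a, b]` by the substitution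
`t = arcPoint a b θ`, up to the factor `(b - a) / 2`. -/
noncomputable def arcIntegrand (a b : ℝ) (w : ℝ → ℝ) : ℝ[X] →ₗ[ℝ] ℝ → ℝ where
  toFun P θ := P.eval (arcPoint a b θ) * (sin θ / w (arcPoint a b θ))
  map_add' P Q := by
    ext θ
    simp only [eval_add, add_mul, Pi.add_apply]
  map_smul' c P := by
    ext θ
    simp only [eval_smul, smul_eq_mul, mul_assoc, RingHom.id_apply, Pi.smul_apply]

theorem arcIntegrand_apply (a b : ℝ) (w : ℝ → ℝ) (P : ℝ[X]) (θ : ℝ) : arcIntegrand a b w P θ =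
    P.eval (arcPoint a b θ) * (sin θ / w (arcPoint a b θ)) :=
  rfl

theorem intervalIntegrable_arcIntegrand (hab : a < b)
    (hw : IntervalIntegrable (fun t => (w t)⁻¹) volume a b) (P : ℝ[X]) :
    IntervalIntegrable (arcIntegrand a b w P) volume 0 π :=
  (intervalIntegrable_sin_div_arcPoint hab hw).continuousOn_mul
    (P.continuous.comp (continuous_arcPoint a b)).continuousOn

theorem integral_abs_eval_div (hab : a < b) (hwpos : ∀ t ∈ Ioo a b, 0 < w t) (P : ℝ[X]) :
    ∫ t in a..b, |P.eval t| / w t =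
      (b - a) / 2 * ∫ θ in (0 : ℝ)..π, |arcIntegrand a b w P θ| := by
  rw [← integral_comp_arcPoint_mul_sin hab.le]
  congr 1
  refine intervalIntegral.integral_congr_Ioo_of_le pi_pos.le fun θ hθ => ?_
  simp only [arcIntegrand_apply]
  rw [abs_mul, abs_of_nonneg (div_nonneg (sin_pos_of_mem_Ioo hθ).le
    (hwpos _ (arcPoint_mem_Ioo hab hθ)).le)]
  ring

theorem eval_transplant_cos (a b : ℝ) (P : ℝ[X]) (θ : ℝ) :
    (transplant a b P).eval (cos θ) = P.eval (arcPoint a b θ) := by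
  simp only [transplant, eval_comp, eval_add, eval_mul, eval_C, eval_X, arcPoint]
  ring_nf

theorem sum_Jent_mul {N : ℕ} (hab : a < b)
    (hw : IntervalIntegrable (fun t => (w t)⁻¹) volume a b) {P : ℝ[X]} {q : Fin (N + 1) → ℝ}
    (hq : transplant a b P = ∑ n : Fin (N + 1), C (q n) * Chebyshev.U ℝ ((n : ℕ) : ℤ)) (k : ℕ) :
    ∑ n : Fin (N + 1), Jent a b w k n * q n = cosMoment (arcIntegrand a b w P) k := by
  have hsin (n : ℕ) (θ : ℝ) : cos (k * θ) * sin ((n + 1) * θ) / w (arcPoint a b θ) =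
      cos (k * θ) * (Chebyshev.U ℝ n).eval (cos θ) * (sin θ / w (arcPoint a b θ)) := by
    rw [← Int.cast_natCast n, ← Chebyshev.U_real_cos]
    ring
  have hint (n : ℕ) : IntervalIntegrable
      (fun θ => cos (k * θ) * sin ((n + 1) * θ) / w (arcPoint a b θ)) volume 0 π := by
    simp only [hsin]
    exact (intervalIntegrable_sin_div_arcPoint hab hw).continuousOn_mul (by fun_prop)
  have hJ (n : Fin (N + 1)) : Jent a b w k n * q n = ∫ θ in (0 : ℝ)..π,
      cos (k * θ) * sin ((n + 1) * θ) / w (arcPoint a b θ) * q n :=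
    (intervalIntegral.integral_mul_const _ _).symm
  simp only [hJ]
  rw [← intervalIntegral.integral_finsetSum fun (n : Fin (N + 1)) _ =>
    (hint (n : ℕ)).mul_const (q n)]
  refine intervalIntegral.integral_congr fun θ _ => ?_
  simp only [arcIntegrand_apply, ← eval_transplant_cos, hq, eval_finsetSum, eval_mul, eval_C, hsin,
    Finset.sum_mul, Finset.mul_sum]
  exact Finset.sum_congr rfl fun n _ => by ring

/-- The Chebyshev polynomials of the second kind, as a polynomial sequence. -/
noncomputable def chebyshevUSequence : Polynomial.Sequence ℝ where
  elems' n := Chebyshev.U ℝ n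
  degree_eq' n := Chebyshev.degree_U_natCast ℝ n

theorem mem_degreeLT_succ_of_natDegree_le {R : Type*} [Semiring R] {N : ℕ} {P : R[X]}
    (hP : P.natDegree ≤ N) : P ∈ degreeLT R (N + 1) :=
  mem_degreeLT.2 ((degree_le_of_natDegree_le hP).trans_lt (by exact_mod_cast N.lt_succ_self))

theorem exists_eq_sum_C_mul_U {N : ℕ} {P : ℝ[X]} (hP : P.natDegree ≤ N) :
    ∃ q : Fin (N + 1) → ℝ, P = ∑ n : Fin (N + 1), C (q n) * Chebyshev.U ℝ ((n : ℕ) : ℤ) := by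
  have hmem : P ∈ degreeLT ℝ (N + 1) := mem_degreeLT_succ_of_natDegree_le hP
  rw [← chebyshevUSequence.span_degreeLT fun n _ => by simp [chebyshevUSequence],
    show Iio (N + 1) = Finset.range (N + 1) by simp,
    Submodule.mem_span_image_finset_iff_exists_fun'] at hmem
  obtain ⟨c, rfl⟩ := hmem
  refine ⟨fun n => c n, ?_⟩
  simp only [Finset.sum_range, smul_eq_C_mul]
  rfl

theorem natDegree_transplant_le (a b : ℝ) (P : ℝ[X]) :
    (transplant a b P).natDegree ≤ P.natDegree :=
  natDegree_comp_le.trans <| by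
    simpa using Nat.mul_le_mul_left P.natDegree (natDegree_linear_le (a := (b - a) / 2)
      (b := (a + b) / 2))

/-! ### Bounds for the ersatz norm -/

section Ersatz

variable {L N : ℕ} {a b : ℕ → ℝ} {P : ℝ[X]}

theorem IsToeplitzSplitting.sum_nonneg {u : ℕ → ℝ → ℝ} (hab : ∀ ℓ < L, a ℓ < b ℓ)
    {yp ym : ℕ → Fin (d + 1) → ℝ} (h : ∀ ℓ < L, IsToeplitzSplitting d (u ℓ) (yp ℓ) (ym ℓ)) :
    0 ≤ ∑ ℓ ∈ Finset.range L, (b ℓ - a ℓ) / 2 * (yp ℓ 0 + ym ℓ 0) :=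
  Finset.sum_nonneg fun ℓ hℓ => by
    rw [Finset.mem_range] at hℓ
    exact mul_nonneg (by linarith [hab ℓ hℓ]) (h ℓ hℓ).add_nonneg

theorem ersatz_eq_sInf (hab : ∀ ℓ < L, a ℓ < b ℓ)
    (hw : ∀ ℓ < L, IntervalIntegrable (fun t => (w t)⁻¹) volume (a ℓ) (b ℓ))
    (d : ℕ) (hP : P.natDegree ≤ N) :
    ersatz L N d a b w P = sInf {s : ℝ | ∃ yp ym : ℕ → Fin (d + 1) → ℝ,
      (∀ ℓ < L, IsToeplitzSplitting d (arcIntegrand (a ℓ) (b ℓ) w P) (yp ℓ) (ym ℓ)) ∧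
      s = ∑ ℓ ∈ Finset.range L, (b ℓ - a ℓ) / 2 * (yp ℓ 0 + ym ℓ 0)} := by
  rw [ersatz]
  congr 1
  ext s
  constructor
  · rintro ⟨q, hq, yp, ym, hJ, hpsd, hs⟩
    refine ⟨yp, ym, fun ℓ hℓ => ⟨fun k => ?_, hpsd ℓ hℓ⟩, hs⟩
    rw [hJ ℓ hℓ, sum_Jent_mul (hab ℓ hℓ) (hw ℓ hℓ) (hq ℓ hℓ)]
  · rintro ⟨yp, ym, h, hs⟩
    choose q hq using fun ℓ => exists_eq_sum_C_mul_U
      ((natDegree_transplant_le (a ℓ) (b ℓ) P).trans hP)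
    refine ⟨q, fun ℓ _ => hq ℓ, yp, ym, fun ℓ hℓ k => ?_, fun ℓ hℓ => (h ℓ hℓ).2, hs⟩
    rw [(h ℓ hℓ).1, sum_Jent_mul (hab ℓ hℓ) (hw ℓ hℓ) (hq ℓ)]

theorem ersatz_le (hab : ∀ ℓ < L, a ℓ < b ℓ)
    (hw : ∀ ℓ < L, IntervalIntegrable (fun t => (w t)⁻¹) volume (a ℓ) (b ℓ))
    (hP : P.natDegree ≤ N) {yp ym : ℕ → Fin (d + 1) → ℝ}
    (h : ∀ ℓ < L, IsToeplitzSplitting d (arcIntegrand (a ℓ) (b ℓ) w P) (yp ℓ) (ym ℓ)) :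
    ersatz L N d a b w P ≤ ∑ ℓ ∈ Finset.range L, (b ℓ - a ℓ) / 2 * (yp ℓ 0 + ym ℓ 0) := by
  rw [ersatz_eq_sInf hab hw d hP]
  refine csInf_le ⟨0, ?_⟩ ⟨yp, ym, h, rfl⟩
  rintro s ⟨zp, zm, hz, rfl⟩
  exact IsToeplitzSplitting.sum_nonneg hab hz

theorem le_ersatz (hab : ∀ ℓ < L, a ℓ < b ℓ)
    (hw : ∀ ℓ < L, IntervalIntegrable (fun t => (w t)⁻¹) volume (a ℓ) (b ℓ))
    (hP : P.natDegree ≤ N) {r : ℝ}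
    (h : ∀ yp ym : ℕ → Fin (d + 1) → ℝ,
      (∀ ℓ < L, IsToeplitzSplitting d (arcIntegrand (a ℓ) (b ℓ) w P) (yp ℓ) (ym ℓ)) →
      r ≤ ∑ ℓ ∈ Finset.range L, (b ℓ - a ℓ) / 2 * (yp ℓ 0 + ym ℓ 0)) :
    r ≤ ersatz L N d a b w P := by
  rw [ersatz_eq_sInf hab hw d hP]
  refine le_csInf ?_ ?_
  · choose! yp ym hy _ using fun ℓ (hℓ : ℓ < L) =>
      exists_isToeplitzSplitting d (intervalIntegrable_arcIntegrand (hab ℓ hℓ) (hw ℓ hℓ) P)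
    exact ⟨_, yp, ym, hy, rfl⟩
  · rintro s ⟨yp, ym, hy, rfl⟩
    exact h yp ym hy

theorem L1K_eq_sum_integral_abs_arcIntegrand (hab : ∀ ℓ < L, a ℓ < b ℓ)
    (hwpos : ∀ ℓ < L, ∀ t ∈ Ioo (a ℓ) (b ℓ), 0 < w t) (P : ℝ[X]) :
    L1K L a b w P = ∑ ℓ ∈ Finset.range L,
      (b ℓ - a ℓ) / 2 * ∫ θ in (0 : ℝ)..π, |arcIntegrand (a ℓ) (b ℓ) w P θ| :=
  Finset.sum_congr rfl fun ℓ hℓ =>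
    integral_abs_eval_div (hab ℓ (Finset.mem_range.1 hℓ)) (hwpos ℓ (Finset.mem_range.1 hℓ)) P

theorem ersatz_le_L1K (hab : ∀ ℓ < L, a ℓ < b ℓ)
    (hw : ∀ ℓ < L, IntervalIntegrable (fun t => (w t)⁻¹) volume (a ℓ) (b ℓ))
    (hwpos : ∀ ℓ < L, ∀ t ∈ Ioo (a ℓ) (b ℓ), 0 < w t) (d : ℕ) (hP : P.natDegree ≤ N) :
    ersatz L N d a b w P ≤ L1K L a b w P := by
  choose! yp ym hy hsum using fun ℓ (hℓ : ℓ < L) =>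
    exists_isToeplitzSplitting d (intervalIntegrable_arcIntegrand (hab ℓ hℓ) (hw ℓ hℓ) P)
  refine (ersatz_le hab hw hP hy).trans_eq ?_
  rw [L1K_eq_sum_integral_abs_arcIntegrand hab hwpos]
  exact Finset.sum_congr rfl fun ℓ hℓ => by rw [hsum ℓ (Finset.mem_range.1 hℓ)]

theorem ersatz_nonneg (hab : ∀ ℓ < L, a ℓ < b ℓ)
    (hw : ∀ ℓ < L, IntervalIntegrable (fun t => (w t)⁻¹) volume (a ℓ) (b ℓ))
    (d : ℕ) (hP : P.natDegree ≤ N) : 0 ≤ ersatz L N d a b w P :=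
  le_ersatz hab hw hP fun _ _ h => IsToeplitzSplitting.sum_nonneg hab h

theorem ersatz_le_ersatz_succ (hab : ∀ ℓ < L, a ℓ < b ℓ)
    (hw : ∀ ℓ < L, IntervalIntegrable (fun t => (w t)⁻¹) volume (a ℓ) (b ℓ))
    (d : ℕ) (hP : P.natDegree ≤ N) :
    ersatz L N d a b w P ≤ ersatz L N (d + 1) a b w P :=
  le_ersatz hab hw hP fun _ _ h => ersatz_le hab hw hP fun ℓ hℓ => (h ℓ hℓ).castSucc

theorem eventually_mul_L1K_le_ersatz (hab : ∀ ℓ < L, a ℓ < b ℓ)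
    (hw : ∀ ℓ < L, IntervalIntegrable (fun t => (w t)⁻¹) volume (a ℓ) (b ℓ))
    (hwpos : ∀ ℓ < L, ∀ t ∈ Ioo (a ℓ) (b ℓ), 0 < w t) {r : ℝ} (hr : r < 1) :
    ∀ᶠ d in atTop, ∀ P : ℝ[X], P.natDegree ≤ N → r * L1K L a b w P ≤ ersatz L N d a b w P := by
  have herror : ∀ᶠ d in atTop, ∀ ℓ ∈ Finset.range L, ∀ P : degreeLT ℝ (N + 1),
      fejerError d (arcIntegrand (a ℓ) (b ℓ) w P) ≤
        (1 - r) * ∫ θ in (0 : ℝ)..π, |arcIntegrand (a ℓ) (b ℓ) w P θ| := by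
    rw [eventually_all_finset]
    intro ℓ hℓ
    rw [Finset.mem_range] at hℓ
    exact eventually_fejerError_le
      ((arcIntegrand (a ℓ) (b ℓ) w).comp (degreeLT ℝ (N + 1)).subtype)
      (fun P => intervalIntegrable_arcIntegrand (hab ℓ hℓ) (hw ℓ hℓ) P) (sub_pos.2 hr)
  filter_upwards [herror] with d hd P hP
  refine le_ersatz hab hw hP fun yp ym h => ?_
  rw [L1K_eq_sum_integral_abs_arcIntegrand hab hwpos, Finset.mul_sum]
  refine Finset.sum_le_sum fun ℓ hℓ => ?_
  have herr := hd ℓ hℓ ⟨P, mem_degreeLT_succ_of_natDegree_le hP⟩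
  rw [Finset.mem_range] at hℓ
  have habs := (h ℓ hℓ).integral_abs_le
    (intervalIntegrable_arcIntegrand (hab ℓ hℓ) (hw ℓ hℓ) P)
  rw [mul_left_comm]
  exact mul_le_mul_of_nonneg_left (by linarith) (by linarith [hab ℓ hℓ])

end Ersatz

/-! ### Infima over monic polynomials -/

/-- The infimum of `F` over the monic polynomials of degree `N`. -/
noncomputable def monicInf (N : ℕ) (F : ℝ[X] → ℝ) : ℝ :=
  sInf {s | ∃ P : ℝ[X], P.Monic ∧ P.natDegree = N ∧ s = F P}

theorem mul_monicInf_le {N : ℕ} {F G : ℝ[X] → ℝ} {c : ℝ} (hc : 0 ≤ c)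
    (hF : ∀ P : ℝ[X], P.Monic → P.natDegree = N → 0 ≤ F P)
    (hFG : ∀ P : ℝ[X], P.Monic → P.natDegree = N → c * F P ≤ G P) :
    c * monicInf N F ≤ monicInf N G := by
  have hbdd : BddBelow {s | ∃ P : ℝ[X], P.Monic ∧ P.natDegree = N ∧ s = F P} := by
    refine ⟨0, ?_⟩
    rintro s ⟨P, hP, hPN, rfl⟩
    exact hF P hP hPN
  refine le_csInf ⟨G (X ^ N), X ^ N, monic_X_pow N, natDegree_X_pow N, rfl⟩ ?_
  rintro s ⟨P, hP, hPN, rfl⟩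
  calc c * monicInf N F ≤ c * F P :=
        mul_le_mul_of_nonneg_left (csInf_le hbdd ⟨P, hP, hPN, rfl⟩) hc
    _ ≤ G P := hFG P hP hPN

theorem monicInf_mono {N : ℕ} {F G : ℝ[X] → ℝ}
    (hF : ∀ P : ℝ[X], P.Monic → P.natDegree = N → 0 ≤ F P)
    (hFG : ∀ P : ℝ[X], P.Monic → P.natDegree = N → F P ≤ G P) :
    monicInf N F ≤ monicInf N G := by
  simpa only [one_mul] using mul_monicInf_le zero_le_one hF (by simpa only [one_mul] using hFG)

theorem tendsto_of_eventually_mul_le {ι : Type*} {f : Filter ι} {s : ι → ℝ} {l : ℝ}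
    (hle : ∀ i, s i ≤ l) (hmul : ∀ r ∈ Ioo (0 : ℝ) 1, ∀ᶠ i in f, r * l ≤ s i) :
    Tendsto s f (nhds l) := by
  refine tendsto_order.2 ⟨fun c hc => ?_, fun c hc => .of_forall fun i => (hle i).trans_lt hc⟩
  have hlim : Tendsto (fun r : ℝ => r * l) (nhdsWithin 1 (Iio 1)) (nhds l) :=
    ((continuous_mul_const l).tendsto' 1 l (one_mul l)).mono_left nhdsWithin_le_nhds
  obtain ⟨r, hcr, hr⟩ :=
    ((hlim.eventually_const_lt hc).and (Ioo_mem_nhdsLT zero_lt_one)).exists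
  exact (hmul r hr).mono fun i => hcr.trans_le

theorem intervalIntegrable_inv_of_continuousOn {a b : ℝ} (hab : a ≤ b)
    (hw : ContinuousOn w (Icc a b)) (hwpos : ∀ t ∈ Icc a b, 0 < w t) :
    IntervalIntegrable (fun t => (w t)⁻¹) volume a b :=
  (hw.inv₀ fun t ht => (hwpos t ht).ne').intervalIntegrable_of_Icc hab

theorem ersatz_minima_converge_general {L : ℕ} {a b : ℕ → ℝ} (hab : ∀ ℓ < L, a ℓ < b ℓ)
    {w : ℝ → ℝ} (hw : ∀ ℓ < L, IntervalIntegrable (fun t => (w t)⁻¹) volume (a ℓ) (b ℓ))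
    (hwpos : ∀ ℓ < L, ∀ t ∈ Ioo (a ℓ) (b ℓ), 0 < w t) (N : ℕ) :
    Monotone (fun d => monicInf N (ersatz L N d a b w)) ∧
      (∀ d, monicInf N (ersatz L N d a b w) ≤ monicInf N (L1K L a b w)) ∧
      Tendsto (fun d => monicInf N (ersatz L N d a b w)) atTop
        (nhds (monicInf N (L1K L a b w))) := by
  have hnonneg (d : ℕ) (P : ℝ[X]) (_ : P.Monic) (hP : P.natDegree = N) :
      0 ≤ ersatz L N d a b w P := ersatz_nonneg hab hw d hP.le
  have hle (d : ℕ) (P : ℝ[X]) (_ : P.Monic) (hP : P.natDegree = N) :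
      ersatz L N d a b w P ≤ L1K L a b w P := ersatz_le_L1K hab hw hwpos d hP.le
  have hmono (d : ℕ) : monicInf N (ersatz L N d a b w) ≤ monicInf N (ersatz L N (d + 1) a b w) :=
    monicInf_mono (hnonneg d) fun _ _ hP => ersatz_le_ersatz_succ hab hw d hP.le
  have hmin (d : ℕ) : monicInf N (ersatz L N d a b w) ≤ monicInf N (L1K L a b w) :=
    monicInf_mono (hnonneg d) (hle d)
  refine ⟨monotone_nat_of_le_succ hmono, hmin, tendsto_of_eventually_mul_le hmin fun r hr => ?_⟩
  filter_upwards [eventually_mul_L1K_le_ersatz hab hw hwpos hr.2] with d hd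
  exact mul_monicInf_le hr.1.le (fun P hP hPN => (hnonneg d P hP hPN).trans (hle d P hP hPN))
    fun P _ hPN => hd P hPN.le

end

/-- The minima `m_d` of `⫽·⫽_d` over monic polynomials of degree `N` are nondecreasing in
`d ≥ N`, bounded above by the minimum `m_∞` of `‖·/w‖_{L1(K)}` over monic polynomials of
degree `N`, and converge to `m_∞` as `d → ∞`. -/
theorem ersatz_minima_converge
    (L : ℕ) (hL : 0 < L) (a b : ℕ → ℝ)
    (ha0 : a 0 = -1) (hbL : b (L - 1) = 1)
    (hab : ∀ ℓ < L, a ℓ < b ℓ)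
    (hgap : ∀ ℓ, ℓ + 1 < L → b ℓ < a (ℓ + 1))
    (w : ℝ → ℝ)
    (hw : ContinuousOn w (⋃ ℓ ∈ Finset.range L, Set.Icc (a ℓ) (b ℓ)))
    (hwpos : ∀ x ∈ ⋃ ℓ ∈ Finset.range L, Set.Icc (a ℓ) (b ℓ), 0 < w x)
    (N : ℕ) (hN : 1 ≤ N)
    (m : ℕ → ℝ)
    (hm : ∀ d, m d = sInf { s : ℝ | ∃ P : Polynomial ℝ, P.Monic ∧ P.natDegree = N ∧
        s = ersatz L N d a b w P })
    (minf : ℝ)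
    (hminf : minf = sInf { s : ℝ | ∃ P : Polynomial ℝ, P.Monic ∧ P.natDegree = N ∧
        s = L1K L a b w P }) :
    (∀ d, N ≤ d → m d ≤ m (d + 1)) ∧
    (∀ d, N ≤ d → m d ≤ minf) ∧
    Tendsto m atTop (nhds minf) := by
  have hIcc (ℓ : ℕ) (hℓ : ℓ < L) :
      Set.Icc (a ℓ) (b ℓ) ⊆ ⋃ ℓ ∈ Finset.range L, Set.Icc (a ℓ) (b ℓ) :=
    Set.subset_biUnion_of_mem (u := fun ℓ => Set.Icc (a ℓ) (b ℓ)) (Finset.mem_range.2 hℓ)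
  have hwposIcc (ℓ : ℕ) (hℓ : ℓ < L) (t : ℝ) (ht : t ∈ Set.Icc (a ℓ) (b ℓ)) : 0 < w t :=
    hwpos t (hIcc ℓ hℓ ht)
  obtain ⟨hmono, hle, hlim⟩ := ersatz_minima_converge_general hab
    (fun ℓ hℓ => intervalIntegrable_inv_of_continuousOn (hab ℓ hℓ).le (hw.mono (hIcc ℓ hℓ))
      (hwposIcc ℓ hℓ))
    (fun ℓ hℓ t ht => hwposIcc ℓ hℓ t (Set.Ioo_subset_Icc_self ht)) N
  obtain rfl := funext hm
  subst hminf
  exact ⟨fun d _ => hmono d.le_succ, fun d _ => hle d, hlim⟩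
end

section
/- Let K = ⋃_{ℓ=1}^L [a_ℓ, b_ℓ] ⊆ [−1,1] with −1 = a_1 < b_1 < a_2 < ⋯ < a_L < b_L = 1, let N ≥ 1, let 𝒯_N be a monic polynomial of degree N minimizing the sup norm ‖P‖_K := max_{x∈K}|P(x)| among monic polynomials of degree N, and let 𝒫_N be a monic polynomial of degree N minimizing the L2 norm ‖P‖_{L2(K)} := (Σ_ℓ ∫_{a_ℓ}^{b_ℓ} P(t)² dt)^{1/2} among monic polynomials of degree N. Then (1/(N+1))·[min_{ℓ=1:L}(b_ℓ − a_ℓ)]^{1/2}·‖𝒯_N‖_K ≤ ‖𝒫_N‖_{L2(K)} ≤ [Σ_{ℓ=1}^L (b_ℓ − a_ℓ)]^{1/2}·‖𝒯_N‖_K. -/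
/-!
On a single interval, the L² norm controls point values of polynomials of degree at most `n`. The
polynomial `q = c · (d/dt)^(n+1) [(t - a)^n (t - b)^(n+1)]`, suitably normalised, reproduces the
value at `a`: integrating by parts, `∫ₐᵇ q p = p(a)` whenever `deg p ≤ n`. Since `q` itself has
degree at most `n`, also `∫ₐᵇ q² = q(a) = (n + 1)² / (b - a)`, and Cauchy–Schwarz gives
`p(a)² ≤ (n + 1)² / (b - a) · ∫ₐᵇ p²`. Splitting an interval at an interior point and adding the
bounds for both halves yields the same constant at every point of the interval. The lower bound
follows by applying this at a point of `K` where `|P|` is maximal, the upper one by integrating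
`T² ≤ ‖T‖_K²`, and minimality lets `P` and `T` be exchanged in each case.
-/

open MeasureTheory Filter Polynomial

/-- The sup norm `‖P‖_K = max_{x ∈ K} |P(x)|` on `K = ⋃_{ℓ<L} [a ℓ, b ℓ]`. -/
noncomputable def supK (L : ℕ) (a b : ℕ → ℝ) (P : Polynomial ℝ) : ℝ :=
  sSup ((fun x => |P.eval x|) '' ⋃ ℓ ∈ Finset.range L, Set.Icc (a ℓ) (b ℓ))

/-- The `L2` norm `‖P‖_{L2(K)} = (∑_ℓ ∫_{a_ℓ}^{b_ℓ} P(t)² dt)^{1/2}`. -/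
noncomputable def L2K (L : ℕ) (a b : ℕ → ℝ) (P : Polynomial ℝ) : ℝ :=
  Real.sqrt (∑ ℓ ∈ Finset.range L, ∫ t in (a ℓ)..(b ℓ), (P.eval t) ^ 2)

theorem sq_integral_mul_le {α : Type*} {m : MeasurableSpace α} {μ : Measure α} {f g : α → ℝ}
    (hf : MemLp f 2 μ) (hg : MemLp g 2 μ) :
    (∫ x, f x * g x ∂μ) ^ 2 ≤ (∫ x, f x ^ 2 ∂μ) * ∫ x, g x ^ 2 ∂μ := by
  have hff : Integrable (fun x ↦ f x ^ 2) μ := hf.integrable_sq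
  have hfg : Integrable (fun x ↦ f x * g x) μ := hf.integrable_mul hg
  have hgg : Integrable (fun x ↦ g x ^ 2) μ := hg.integrable_sq
  have hlin (s : ℝ) : Integrable (fun x ↦ 2 * s * (f x * g x) + f x ^ 2) μ :=
    (hfg.const_mul _).add hff
  have hquad (s : ℝ) : 0 ≤ (∫ x, g x ^ 2 ∂μ) * (s * s) + (2 * ∫ x, f x * g x ∂μ) * s
      + ∫ x, f x ^ 2 ∂μ := by
    calc 0 ≤ ∫ x, (f x + s * g x) ^ 2 ∂μ := integral_nonneg fun x ↦ sq_nonneg _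
      _ = ∫ x, (s * s * g x ^ 2 + (2 * s * (f x * g x) + f x ^ 2)) ∂μ := by
        congr with x
        ring
      _ = _ := by
        rw [integral_add (hgg.const_mul _) (hlin s),
          integral_add (hfg.const_mul _) hff, integral_const_mul, integral_const_mul]
        ring
  have hdiscrim := discrim_le_zero hquad
  rw [discrim] at hdiscrim
  linarith

theorem sq_intervalIntegral_mul_le {f g : ℝ → ℝ} {a b : ℝ} {μ : Measure ℝ}
    (hf : MemLp f 2 (μ.restrict (Set.uIoc a b))) (hg : MemLp g 2 (μ.restrict (Set.uIoc a b))) :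
    (∫ t in a..b, f t * g t ∂μ) ^ 2 ≤ (∫ t in a..b, f t ^ 2 ∂μ) * ∫ t in a..b, g t ^ 2 ∂μ := by
  have h := sq_integral_mul_le hf hg
  simp only [intervalIntegral.intervalIntegral_eq_integral_uIoc, smul_eq_mul]
  split_ifs <;> linarith

section IteratedDerivative

variable {R : Type*} [CommRing R]

theorem isRoot_iterate_derivative_of_pow_dvd {p : R[X]} {c : R} {n k : ℕ}
    (hp : (X - C c) ^ n ∣ p) (hk : k < n) : (derivative^[k] p).IsRoot c :=
  dvd_iff_isRoot.mp <| (dvd_pow_self _ (Nat.sub_ne_zero_of_lt hk)).trans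
    (pow_sub_dvd_iterate_derivative_of_pow_dvd k hp)

theorem eval_iterate_derivative_eq_factorial_mul_coeff_taylor (p : R[X]) (c : R) (n : ℕ) :
    (derivative^[n] p).eval c = n.factorial * (taylor c p).coeff n := by
  rw [taylor_coeff, ← factorial_smul_hasseDeriv, LinearMap.smul_apply, eval_smul, nsmul_eq_mul]

theorem eval_iterate_derivative_X_sub_C_pow_mul (q : R[X]) (c : R) (n k : ℕ) :
    (derivative^[n + k] ((X - C c) ^ n * q)).eval c =
      (n + k).descFactorial n * (derivative^[k] q).eval c := by
  have htaylor : taylor c ((X - C c) ^ n * q) = X ^ n * taylor c q := by simp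
  have hcoeff : (X ^ n * taylor c q).coeff (n + k) = (taylor c q).coeff k := by
    rw [add_comm, coeff_X_pow_mul]
  have hfactorial : k.factorial * (n + k).descFactorial n = (n + k).factorial := by
    simpa using Nat.factorial_mul_descFactorial (Nat.le_add_right n k)
  rw [eval_iterate_derivative_eq_factorial_mul_coeff_taylor, htaylor, hcoeff,
    eval_iterate_derivative_eq_factorial_mul_coeff_taylor, ← hfactorial]
  push_cast
  ring

end IteratedDerivative

section IntegrationByParts

variable {a b : ℝ}

theorem integral_derivative_mul (f p : ℝ[X]) :
    ∫ t in a..b, (derivative f).eval t * p.eval t =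
      f.eval b * p.eval b - f.eval a * p.eval a -
        ∫ t in a..b, f.eval t * (derivative p).eval t := by
  rw [intervalIntegral.integral_mul_deriv_eq_deriv_mul
    (fun t _ ↦ f.hasDerivAt t) (fun t _ ↦ p.hasDerivAt t)
    ((derivative f).continuous.intervalIntegrable _ _)
    ((derivative p).continuous.intervalIntegrable _ _), sub_sub_cancel]

theorem integral_iterate_derivative_mul {w : ℝ[X]} {n : ℕ}
    (ha : ∀ k < n, (derivative^[k] w).IsRoot a) (hb : ∀ k < n, (derivative^[k] w).IsRoot b)
    (p : ℝ[X]) :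
    ∫ t in a..b, (derivative^[n] w).eval t * p.eval t =
      (-1) ^ n * ∫ t in a..b, w.eval t * (derivative^[n] p).eval t := by
  induction n generalizing p with
  | zero => simp
  | succ n ih =>
    have hparts := ih (fun k hk ↦ ha k (Nat.lt_succ_of_lt hk))
      fun k hk ↦ hb k (Nat.lt_succ_of_lt hk)
    rw [Function.iterate_succ_apply', integral_derivative_mul, (ha n n.lt_succ_self).eq_zero,
      (hb n n.lt_succ_self).eq_zero, hparts, Function.iterate_succ_apply]
    ring

end IntegrationByParts

section EndpointKernel

/-- The polynomial of degree at most `n` representing the functional `p ↦ p(a)` on polynomials of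
degree at most `n`, for the pairing `∫ₐᵇ p q`. It is given by a Rodrigues-type formula, in which
`a > b` is allowed; for `a = b` it is the junk value `0`. -/
noncomputable def endpointKernel (n : ℕ) (a b : ℝ) : ℝ[X] :=
  C (-(n.factorial * (a - b) ^ (n + 1)))⁻¹ *
    derivative^[n + 1] ((X - C a) ^ n * (X - C b) ^ (n + 1))

variable {n : ℕ} {a b : ℝ}

theorem natDegree_endpointKernel_le : (endpointKernel n a b).natDegree ≤ n := by
  have hdeg : ((X - C a) ^ n * (X - C b) ^ (n + 1)).natDegree ≤ n + (n + 1) := by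
    compute_degree
  refine (natDegree_C_mul_le _ _).trans ((natDegree_iterate_derivative _ _).trans ?_)
  omega

theorem eval_endpointKernel_left (hab : a ≠ b) :
    (endpointKernel n a b).eval a = ((n : ℝ) + 1) ^ 2 / (b - a) := by
  have hne : b - a ≠ 0 := sub_ne_zero.mpr hab.symm
  have hderiv : (derivative^[n + 1] ((X - C a) ^ n * (X - C b) ^ (n + 1))).eval a =
      (n + 1).factorial * ((n + 1) * (a - b) ^ n) := by
    have hdesc : (n + 1).descFactorial n = (n + 1).factorial := by
      simpa using Nat.factorial_mul_descFactorial (Nat.le_add_right n 1)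
    rw [eval_iterate_derivative_X_sub_C_pow_mul, hdesc]
    simp [derivative_X_sub_C_pow]
  rw [endpointKernel, eval_mul, eval_C, hderiv, Nat.factorial_succ]
  push_cast
  field_simp
  ring

theorem integral_endpointKernel_mul (hab : a ≠ b) {p : ℝ[X]} (hp : p.natDegree ≤ n) :
    ∫ t in a..b, (endpointKernel n a b).eval t * p.eval t = p.eval a := by
  set w : ℝ[X] := (X - C a) ^ n * (X - C b) ^ (n + 1) with hw
  have hroot_a (k : ℕ) (hk : k < n) : (derivative^[k] w).IsRoot a :=
    isRoot_iterate_derivative_of_pow_dvd (dvd_mul_right _ _) hk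
  have hroot_b (k : ℕ) (hk : k < n + 1) : (derivative^[k] w).IsRoot b :=
    isRoot_iterate_derivative_of_pow_dvd (dvd_mul_left _ _) hk
  have hleft : (derivative^[n] w).eval a = n.factorial * (a - b) ^ (n + 1) :=
    (eval_iterate_derivative_X_sub_C_pow_mul _ a n 0).trans (by simp [Nat.descFactorial_self])
  have horth : ∫ t in a..b, (derivative^[n] w).eval t * (derivative p).eval t = 0 := by
    rw [integral_iterate_derivative_mul hroot_a fun k hk ↦ hroot_b k (Nat.lt_succ_of_lt hk),
      ← Function.iterate_succ_apply, iterate_derivative_eq_zero (Nat.lt_succ_of_le hp)]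
    simp
  simp only [endpointKernel, ← hw, eval_mul, eval_C, mul_assoc,
    intervalIntegral.integral_const_mul]
  rw [Function.iterate_succ_apply', integral_derivative_mul, (hroot_b n n.lt_succ_self).eq_zero,
    horth, hleft]
  field_simp
  ring

end EndpointKernel

section PointEvaluation

variable (p : ℝ[X])

theorem abs_sub_mul_sq_eval_le (a b : ℝ) :
    |b - a| * p.eval a ^ 2 ≤ ((p.natDegree : ℝ) + 1) ^ 2 * |∫ t in a..b, p.eval t ^ 2| := by
  obtain rfl | hab := eq_or_ne a b
  · simp
  have hne : b - a ≠ 0 := sub_ne_zero.mpr hab.symm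
  set q := endpointKernel p.natDegree a b
  have hmemLp (f : ℝ[X]) : MemLp (fun t ↦ f.eval t) 2 (volume.restrict (Set.uIoc a b)) :=
    (memLp_two_iff_integrable_sq f.continuous.aestronglyMeasurable).mpr
      ((f.continuous.pow 2).intervalIntegrable a b).def'
  have hq : ∫ t in a..b, q.eval t ^ 2 = ((p.natDegree : ℝ) + 1) ^ 2 / (b - a) := by
    simp only [sq (q.eval _)]
    rw [integral_endpointKernel_mul hab natDegree_endpointKernel_le, eval_endpointKernel_left hab]
  have hcs : p.eval a ^ 2 ≤
      ((p.natDegree : ℝ) + 1) ^ 2 / (b - a) * ∫ t in a..b, p.eval t ^ 2 := by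
    rw [← hq, ← integral_endpointKernel_mul hab le_rfl]
    exact sq_intervalIntegral_mul_le (hmemLp q) (hmemLp p)
  calc |b - a| * p.eval a ^ 2
      ≤ |b - a| * |((p.natDegree : ℝ) + 1) ^ 2 / (b - a) * ∫ t in a..b, p.eval t ^ 2| := by
        gcongr
        exact hcs.trans (le_abs_self _)
    _ = ((p.natDegree : ℝ) + 1) ^ 2 * |∫ t in a..b, p.eval t ^ 2| := by
        rw [← abs_mul, ← mul_assoc, mul_div_cancel₀ _ hne, abs_mul, abs_sq]

theorem sub_mul_sq_eval_le {a b x : ℝ} (hx : x ∈ Set.Icc a b) :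
    (b - a) * p.eval x ^ 2 ≤ ((p.natDegree : ℝ) + 1) ^ 2 * ∫ t in a..b, p.eval t ^ 2 := by
  have hint (u v : ℝ) : IntervalIntegrable (fun t ↦ p.eval t ^ 2) volume u v :=
    (p.continuous.pow 2).intervalIntegrable u v
  have hnonneg {u v : ℝ} (huv : u ≤ v) : 0 ≤ ∫ t in u..v, p.eval t ^ 2 :=
    intervalIntegral.integral_nonneg huv fun _ _ ↦ sq_nonneg _
  have hright := abs_sub_mul_sq_eval_le p x b
  have hleft := abs_sub_mul_sq_eval_le p x a
  rw [abs_of_nonneg (sub_nonneg.mpr hx.2), abs_of_nonneg (hnonneg hx.2)] at hright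
  rw [abs_sub_comm, abs_of_nonneg (sub_nonneg.mpr hx.1), intervalIntegral.integral_symm, abs_neg,
    abs_of_nonneg (hnonneg hx.1)] at hleft
  rw [← intervalIntegral.integral_add_adjacent_intervals (hint a x) (hint x b)]
  linarith

end PointEvaluation

section NormsOnUnion

variable {L : ℕ} {a b : ℕ → ℝ}

theorem isCompact_biUnion_Icc : IsCompact (⋃ ℓ ∈ Finset.range L, Set.Icc (a ℓ) (b ℓ)) :=
  (Finset.range L).isCompact_biUnion fun _ _ ↦ isCompact_Icc

theorem supK_nonneg (p : ℝ[X]) : 0 ≤ supK L a b p :=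
  Real.sSup_nonneg (by rintro _ ⟨x, -, rfl⟩; exact abs_nonneg _)

theorem abs_eval_le_supK (p : ℝ[X]) {ℓ : ℕ} (hℓ : ℓ < L) {x : ℝ} (hx : x ∈ Set.Icc (a ℓ) (b ℓ)) :
    |p.eval x| ≤ supK L a b p :=
  le_csSup (isCompact_biUnion_Icc.bddAbove_image p.continuous.abs.continuousOn)
    ⟨x, Set.mem_biUnion (Finset.mem_coe.mpr (Finset.mem_range.mpr hℓ)) hx, rfl⟩

theorem exists_abs_eval_eq_supK (p : ℝ[X]) {k : ℕ} (hk : k < L) (hab : a k ≤ b k) :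
    ∃ ℓ < L, ∃ x ∈ Set.Icc (a ℓ) (b ℓ), |p.eval x| = supK L a b p := by
  have hne : (⋃ ℓ ∈ Finset.range L, Set.Icc (a ℓ) (b ℓ)).Nonempty :=
    ⟨a k, Set.mem_biUnion (Finset.mem_coe.mpr (Finset.mem_range.mpr hk)) ⟨le_rfl, hab⟩⟩
  obtain ⟨x, hxK, hx⟩ :=
    isCompact_biUnion_Icc.exists_sSup_image_eq hne p.continuous.abs.continuousOn
  obtain ⟨ℓ, hℓ, hxℓ⟩ := Set.mem_iUnion₂.mp hxK
  exact ⟨ℓ, Finset.mem_range.mp hℓ, x, hxℓ, hx.symm⟩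

theorem L2K_le_sqrt_mul_supK (hab : ∀ ℓ < L, a ℓ ≤ b ℓ) (p : ℝ[X]) :
    L2K L a b p ≤ √(∑ ℓ ∈ Finset.range L, (b ℓ - a ℓ)) * supK L a b p := by
  have hint (ℓ : ℕ) (hℓ : ℓ < L) :
      ∫ t in (a ℓ)..(b ℓ), p.eval t ^ 2 ≤ (b ℓ - a ℓ) * supK L a b p ^ 2 := by
    rw [← smul_eq_mul, ← intervalIntegral.integral_const]
    refine intervalIntegral.integral_mono_on (hab ℓ hℓ)
      ((p.continuous.pow 2).intervalIntegrable _ _) intervalIntegrable_const fun t ht ↦ ?_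
    exact sq_le_sq.mpr ((abs_eval_le_supK p hℓ ht).trans (le_abs_self _))
  rw [L2K, ← Real.sqrt_sq (supK_nonneg p), ← Real.sqrt_mul' _ (sq_nonneg _), Finset.sum_mul]
  exact Real.sqrt_le_sqrt (Finset.sum_le_sum fun ℓ hℓ ↦ hint ℓ (Finset.mem_range.mp hℓ))

theorem integral_sq_eval_le_sq_L2K (hab : ∀ ℓ < L, a ℓ ≤ b ℓ) (p : ℝ[X]) {ℓ : ℕ} (hℓ : ℓ < L) :
    ∫ t in (a ℓ)..(b ℓ), p.eval t ^ 2 ≤ L2K L a b p ^ 2 := by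
  have hnonneg : ∀ i ∈ Finset.range L, 0 ≤ ∫ t in (a i)..(b i), p.eval t ^ 2 := fun i hi ↦
    intervalIntegral.integral_nonneg (hab i (Finset.mem_range.mp hi)) fun _ _ ↦ sq_nonneg _
  rw [L2K, Real.sq_sqrt (Finset.sum_nonneg hnonneg)]
  exact Finset.single_le_sum hnonneg (Finset.mem_range.mpr hℓ)

theorem sqrt_mul_supK_le_mul_L2K (hL : 0 < L) (hab : ∀ ℓ < L, a ℓ ≤ b ℓ) {m : ℝ}
    (hm : ∀ ℓ < L, m ≤ b ℓ - a ℓ) (p : ℝ[X]) :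
    √m * supK L a b p ≤ ((p.natDegree : ℝ) + 1) * L2K L a b p := by
  obtain ⟨ℓ, hℓ, x, hx, hsup⟩ := exists_abs_eval_eq_supK p hL (hab 0 hL)
  have hsq : m * p.eval x ^ 2 ≤ (((p.natDegree : ℝ) + 1) * L2K L a b p) ^ 2 := by
    calc m * p.eval x ^ 2
        ≤ (b ℓ - a ℓ) * p.eval x ^ 2 := by gcongr; exact hm ℓ hℓ
      _ ≤ ((p.natDegree : ℝ) + 1) ^ 2 * ∫ t in (a ℓ)..(b ℓ), p.eval t ^ 2 :=
        sub_mul_sq_eval_le p hx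
      _ ≤ ((p.natDegree : ℝ) + 1) ^ 2 * L2K L a b p ^ 2 := by
        gcongr; exact integral_sq_eval_le_sq_L2K hab p hℓ
      _ = _ := (mul_pow _ _ _).symm
  rw [← hsup, ← Real.sqrt_sq_eq_abs, ← Real.sqrt_mul' _ (sq_nonneg _)]
  exact Real.sqrt_le_left (mul_nonneg (by positivity) (Real.sqrt_nonneg _)) |>.mpr hsq

end NormsOnUnion

theorem L2_min_vs_sup_min_general {L : ℕ} (hL : 0 < L) {a b : ℕ → ℝ}
    (hab : ∀ ℓ < L, a ℓ ≤ b ℓ) {S : Set ℝ[X]} {T P : ℝ[X]} (hT : T ∈ S) (hP : P ∈ S)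
    (hTmin : IsMinOn (supK L a b) S T) (hPmin : IsMinOn (L2K L a b) S P) :
    1 / ((P.natDegree : ℝ) + 1) *
        √((Finset.range L).inf' (Finset.nonempty_range_iff.mpr hL.ne') fun ℓ ↦ b ℓ - a ℓ) *
          supK L a b T ≤ L2K L a b P ∧
    L2K L a b P ≤ √(∑ ℓ ∈ Finset.range L, (b ℓ - a ℓ)) * supK L a b T := by
  refine ⟨?_, (hPmin hT).trans (L2K_le_sqrt_mul_supK hab T)⟩
  rw [one_div, mul_assoc, inv_mul_le_iff₀ (by positivity)]
  refine (mul_le_mul_of_nonneg_left (hTmin hP) (Real.sqrt_nonneg _)).trans ?_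
  exact sqrt_mul_supK_le_mul_L2K hL hab
    (fun ℓ hℓ ↦ Finset.inf'_le _ (Finset.mem_range.mpr hℓ)) P

/-- Comparison of the sup norm of the Chebyshev (sup-norm-minimal) monic polynomial `T`
and the `L2` norm of the `L2`-minimal monic polynomial `P` of degree `N` on `K`:
`(1/(N+1)) · (min_ℓ (b_ℓ − a_ℓ))^{1/2} · ‖T‖_K ≤ ‖P‖_{L2(K)} ≤ (∑_ℓ (b_ℓ − a_ℓ))^{1/2} · ‖T‖_K`. -/
theorem L2_min_vs_sup_min
    (L : ℕ) (hL : 0 < L) (a b : ℕ → ℝ)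
    (ha0 : a 0 = -1) (hbL : b (L - 1) = 1)
    (hab : ∀ ℓ < L, a ℓ < b ℓ)
    (hgap : ∀ ℓ, ℓ + 1 < L → b ℓ < a (ℓ + 1))
    (N : ℕ) (hN : 1 ≤ N)
    (T : Polynomial ℝ) (hTmonic : T.Monic) (hTdeg : T.natDegree = N)
    (hTmin : ∀ Q : Polynomial ℝ, Q.Monic → Q.natDegree = N → supK L a b T ≤ supK L a b Q)
    (P : Polynomial ℝ) (hPmonic : P.Monic) (hPdeg : P.natDegree = N)
    (hPmin : ∀ Q : Polynomial ℝ, Q.Monic → Q.natDegree = N → L2K L a b P ≤ L2K L a b Q) :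
    (1 / ((N : ℝ) + 1)) *
        Real.sqrt ((Finset.range L).inf' (Finset.nonempty_range_iff.mpr hL.ne')
          (fun ℓ => b ℓ - a ℓ)) * supK L a b T
      ≤ L2K L a b P ∧
    L2K L a b P ≤ Real.sqrt (∑ ℓ ∈ Finset.range L, (b ℓ - a ℓ)) * supK L a b T := by
  subst hPdeg
  exact L2_min_vs_sup_min_general (S := {Q | Q.Monic ∧ Q.natDegree = P.natDegree}) hL
    (fun ℓ hℓ ↦ (hab ℓ hℓ).le) ⟨hTmonic, hTdeg⟩ ⟨hPmonic, rfl⟩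
    (fun Q hQ ↦ hTmin Q hQ.1 hQ.2) fun Q hQ ↦ hPmin Q hQ.1 hQ.2
end
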